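/- Let A be a finite-dimensional real affine space over V, let g ≠ 0 be a symmetric bilinear form on V, let CM_g be the Cayley–Menger form of g, and let v_m be the coefficient functional on W_g. Then a linear functional φ on W_g is of the form φ = ev_P for some point P ∈ A if and only if CM_g(φ, φ) = 0 and CM_g(φ, v_m) = 1. -/

import Mathlib

/-!
A quadratic function `δ` with Hessian `B` satisfies
`δ((1-t)P + tQ) = (1-t) δ(P) + t δ(Q) - t(1-t)/2 · B(Q - P, Q - P)`. So does
`P ↦ B(P - O, P - O) / 2`, and the difference of the two preserves affine combinations of pairs of
points, so it is affine. Hence a functional on `W_g` is determined by its values on affine functions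
and on a single function with Hessian `g`. Since `V` is finite-dimensional, a functional
annihilating `1` acts on affine functions as `f ↦ f.linear x` for some `x ∈ V`. So a functional with
`φ(1) = 1` agrees on affine functions with some `ev_P`, and it equals `ev_P + t • v_m` for some `t`.

Pairing `2 ev_P + 2 ev_Q - 4 ev_M = (g(Q - P, Q - P) / 2) • v_m`, where `M` is the midpoint of `P`
and `Q`, with `ev_P` gives `CM_g(ev_P, v_m) = 1`; as `v_m` is represented by `0 ∈ V`, this yields
`CM_g(φ, v_m) = φ(1)` for all `φ`. Finally `CM_g(ev_P + t • v_m, ev_P + t • v_m) = 2t`.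
-/

/-- A function `δ : A → ℝ` on a real affine space is *quadratic* if for all points
`P, Q` and all `α, β ∈ ℝ` with `α + β = 1`,
`δ(α·P + β·Q) = α(α−β)·δ(P) + β(β−α)·δ(Q) + 4αβ·δ(midpoint(P,Q))`. -/
def IsQuadraticFn {V A : Type*} [AddCommGroup V] [Module ℝ V] [AddTorsor V A]
    (δ : A → ℝ) : Prop :=
  ∀ (P Q : A) (α β : ℝ), α + β = 1 →
    δ (AffineMap.lineMap P Q β) =
      α * (α - β) * δ P + β * (β - α) * δ Q + 4 * α * β * δ (midpoint ℝ P Q)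

/-- `B` is the Hessian of `δ`. -/
def IsHessianOf {V A : Type*} [AddCommGroup V] [Module ℝ V] [AddTorsor V A]
    (δ : A → ℝ) (B : LinearMap.BilinForm ℝ V) : Prop :=
  ∀ P Q : A, 2 * δ P + 2 * δ Q - 4 * δ (midpoint ℝ P Q) =
    (1/2 : ℝ) * B (Q -ᵥ P) (Q -ᵥ P)

/-- `W_g`: the space of quadratic functions `A → ℝ` whose Hessian is a scalar
multiple of `g`, as a submodule of `A → ℝ`. -/
def Wg {V : Type*} [AddCommGroup V] [Module ℝ V]
    (g : LinearMap.BilinForm ℝ V) (A : Type*) [AddTorsor V A] :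
    Submodule ℝ (A → ℝ) where
  carrier := {δ : A → ℝ | IsQuadraticFn δ ∧ ∃ c : ℝ, IsHessianOf δ (c • g)}
  add_mem' := by
    rintro a b ⟨ha1, ca, ha2⟩ ⟨hb1, cb, hb2⟩
    refine ⟨fun P Q α β h => ?_, ca + cb, fun P Q => ?_⟩
    · have h1 := ha1 P Q α β h
      have h2 := hb1 P Q α β h
      simp only [Pi.add_apply]
      linear_combination h1 + h2
    · have h1 := ha2 P Q
      have h2 := hb2 P Q
      simp only [Pi.add_apply, LinearMap.add_apply, LinearMap.smul_apply,
        smul_eq_mul] at h1 h2 ⊢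
      linear_combination h1 + h2
  zero_mem' := by
    refine ⟨fun P Q α β h => ?_, 0, fun P Q => ?_⟩
    · simp only [Pi.zero_apply]; ring
    · simp only [Pi.zero_apply, zero_smul, LinearMap.zero_apply]; ring
  smul_mem' := by
    rintro c a ⟨ha1, ca, ha2⟩
    refine ⟨fun P Q α β h => ?_, c * ca, fun P Q => ?_⟩
    · have h1 := ha1 P Q α β h
      simp only [Pi.smul_apply, smul_eq_mul]
      linear_combination c * h1
    · have h1 := ha2 P Q
      simp only [Pi.smul_apply, smul_eq_mul, LinearMap.smul_apply] at h1 ⊢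
      linear_combination c * h1

/-- The evaluation functional `ev_P : W_g → ℝ` at a point `P`. -/
def evW {V : Type*} [AddCommGroup V] [Module ℝ V]
    (g : LinearMap.BilinForm ℝ V) {A : Type*} [AddTorsor V A] (P : A) :
    Module.Dual ℝ (Wg g A) where
  toFun δ := (δ : A → ℝ) P
  map_add' x y := rfl
  map_smul' c x := rfl

/-- `φ` annihilates the constant function `1 ∈ W_g`. -/
def AnnihilatesOne {V : Type*} [AddCommGroup V] [Module ℝ V]
    (g : LinearMap.BilinForm ℝ V) {A : Type*} [AddTorsor V A]
    (φ : Module.Dual ℝ (Wg g A)) : Prop :=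
  ∀ h1 : (fun _ : A => (1 : ℝ)) ∈ Wg g A, φ ⟨fun _ => (1 : ℝ), h1⟩ = 0

/-- `x ∈ V` represents the functional `φ` on `W_g`: for every affine function
`f : A → ℝ` (an element of `W_g`), `φ(f) = (linear part of f)(x)`. -/
def Represents {V : Type*} [AddCommGroup V] [Module ℝ V]
    (g : LinearMap.BilinForm ℝ V) {A : Type*} [AddTorsor V A]
    (φ : Module.Dual ℝ (Wg g A)) (x : V) : Prop :=
  ∀ (f : A →ᵃ[ℝ] ℝ) (hf : ⇑f ∈ Wg g A), φ ⟨⇑f, hf⟩ = f.linear x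

/-- `C` is a Cayley–Menger form for `g`: a symmetric bilinear form on the dual of
`W_g` such that (i) every evaluation functional `ev_P` is isotropic, and (ii) on
functionals annihilating the constant `1`, `C(φ, ψ) = −g(x_φ, x_ψ)`. -/
def IsCayleyMenger {V : Type*} [AddCommGroup V] [Module ℝ V]
    (g : LinearMap.BilinForm ℝ V) (A : Type*) [AddTorsor V A]
    (C : LinearMap.BilinForm ℝ (Module.Dual ℝ (Wg g A))) : Prop :=
  (∀ φ ψ, C φ ψ = C ψ φ) ∧
  (∀ P : A, C (evW g P) (evW g P) = 0) ∧
  (∀ (φ ψ : Module.Dual ℝ (Wg g A)) (x y : V),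
    AnnihilatesOne g φ → AnnihilatesOne g ψ →
    Represents g φ x → Represents g ψ y → C φ ψ = - g x y)

section AffineMaps

variable {k V₁ P₁ V₂ P₂ : Type*} [AddCommGroup V₁] [AddTorsor V₁ P₁]
  [AddCommGroup V₂] [AddTorsor V₂ P₂]

lemma exists_affineMap_coe_eq_of_map_lineMap [Ring k] [Invertible (2 : k)] [Module k V₁]
    [Module k V₂] {f : P₁ → P₂}
    (hf : ∀ (P Q : P₁) (t : k),
      f (AffineMap.lineMap P Q t) = AffineMap.lineMap (f P) (f Q) t) :
    ∃ F : P₁ →ᵃ[k] P₂, ⇑F = f := by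
  obtain ⟨O⟩ := (inferInstance : Nonempty P₁)
  let L : V₁ → V₂ := fun v => f (v +ᵥ O) -ᵥ f O
  have map_midpoint : ∀ v w, L (midpoint k v w) = midpoint k (L v) (L w) := fun v w => by
    have hmid : midpoint k v w +ᵥ O = midpoint k (v +ᵥ O) (w +ᵥ O) :=
      (AffineEquiv.vaddConst k O).map_midpoint v w
    calc L (midpoint k v w)
        = f (midpoint k (v +ᵥ O) (w +ᵥ O)) -ᵥ f O := by rw [← hmid]
      _ = midpoint k (f (v +ᵥ O)) (f (w +ᵥ O)) -ᵥ f O := congrArg (· -ᵥ f O) (hf _ _ _)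
      _ = midpoint k (L v) (L w) := (AffineEquiv.vaddConst k (f O)).symm.map_midpoint _ _
  let Ladd : V₁ →+ V₂ := AddMonoidHom.ofMapMidpoint k k L (by simp [L]) map_midpoint
  have map_smul : ∀ (c : k) (v : V₁), L (c • v) = c • L v := fun c v => by
    simp only [L]
    rw [← AffineMap.lineMap_vadd_apply, hf, AffineMap.lineMap_vsub_left]
  exact ⟨AffineMap.mk' f { Ladd with map_smul' := map_smul } O fun P => by simp [Ladd, L], rfl⟩

lemma exists_forall_dual_affineMap_apply_eq_linear [Field k] [Module k V₁]
    [FiniteDimensional k V₁] {L : Module.Dual k (P₁ →ᵃ[k] k)}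
    (hL : L (AffineMap.const k P₁ 1) = 0) : ∃ x : V₁, ∀ f, L f = f.linear x := by
  let linearPart : (P₁ →ᵃ[k] k) →ₗ[k] Module.Dual k V₁ :=
    { toFun := AffineMap.linear, map_add' := fun _ _ => rfl, map_smul' := fun _ _ => rfl }
  have hker : L ∈ linearPart.ker.dualAnnihilator := by
    rw [Submodule.mem_dualAnnihilator]
    intro f hf
    obtain ⟨c, rfl⟩ := f.linear_eq_zero_iff_exists_const.mp hf
    have hc : AffineMap.const k P₁ c = c • AffineMap.const k P₁ 1 := by ext; simp
    rw [hc, map_smul, hL, smul_zero]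
  obtain ⟨Φ, rfl⟩ := linearPart.range_dualMap_eq_dualAnnihilator_ker ▸ hker
  obtain ⟨x, rfl⟩ := (Module.evalEquiv k V₁).surjective Φ
  exact ⟨x, fun _ => rfl⟩

end AffineMaps

section CayleyMenger

variable {V A : Type*} [AddCommGroup V] [Module ℝ V] [AddTorsor V A]

lemma isQuadraticFn_and_isHessianOf_iff {δ : A → ℝ} {B : LinearMap.BilinForm ℝ V} :
    IsQuadraticFn δ ∧ IsHessianOf δ B ↔ ∀ (P Q : A) (t : ℝ),
      δ (AffineMap.lineMap P Q t) =
        (1 - t) * δ P + t * δ Q - t * (1 - t) / 2 * B (Q -ᵥ P) (Q -ᵥ P) := by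
  constructor
  · rintro ⟨hδ, hB⟩ P Q t
    linear_combination hδ P Q (1 - t) t (by ring) - t * (1 - t) * hB P Q
  · intro h
    have hmid : ∀ P Q : A, δ (midpoint ℝ P Q) =
        (δ P + δ Q) / 2 - B (Q -ᵥ P) (Q -ᵥ P) / 8 := fun P Q => by
      rw [midpoint, h, invOf_eq_inv]
      ring
    refine ⟨fun P Q α β hαβ => ?_, fun P Q => ?_⟩
    · obtain rfl : α = 1 - β := by linarith
      rw [h, hmid]
      ring
    · rw [hmid]
      ring

lemma isQuadraticFn_and_isHessianOf_zero_affineMap (f : A →ᵃ[ℝ] ℝ) :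
    IsQuadraticFn f ∧ IsHessianOf f (0 : LinearMap.BilinForm ℝ V) :=
  isQuadraticFn_and_isHessianOf_iff.mpr fun P Q t => by
    simp [AffineMap.apply_lineMap, AffineMap.lineMap_apply_ring]

/-- Half the "squared distance" from `O` measured by the bilinear form `B`: the quadratic function
with Hessian `B` whose value and linear part at `O` vanish. -/
noncomputable def halfSqDist (B : LinearMap.BilinForm ℝ V) (O P : A) : ℝ :=
  1 / 2 * B (P -ᵥ O) (P -ᵥ O)

lemma halfSqDist_lineMap (B : LinearMap.BilinForm ℝ V) (O P Q : A) (t : ℝ) :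
    halfSqDist B O (AffineMap.lineMap P Q t) =
      (1 - t) * halfSqDist B O P + t * halfSqDist B O Q
        - t * (1 - t) / 2 * B (Q -ᵥ P) (Q -ᵥ P) := by
  have hPQ : AffineMap.lineMap P Q t -ᵥ O = (P -ᵥ O) + t • (Q -ᵥ P) := by
    rw [AffineMap.lineMap_apply, vadd_vsub_assoc, add_comm]
  have hQ : Q -ᵥ O = (P -ᵥ O) + (Q -ᵥ P) := by rw [add_comm, vsub_add_vsub_cancel]
  simp only [halfSqDist, hPQ, hQ, map_add, map_smul, LinearMap.add_apply, LinearMap.smul_apply,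
    smul_eq_mul]
  ring

lemma isQuadraticFn_and_isHessianOf_halfSqDist (B : LinearMap.BilinForm ℝ V) (O : A) :
    IsQuadraticFn (halfSqDist B O) ∧ IsHessianOf (halfSqDist B O) B :=
  isQuadraticFn_and_isHessianOf_iff.mpr (halfSqDist_lineMap B O)

lemma IsQuadraticFn.exists_eq_affineMap_add_halfSqDist {δ : A → ℝ} {B : LinearMap.BilinForm ℝ V}
    (hδ : IsQuadraticFn δ) (hB : IsHessianOf δ B) (O : A) :
    ∃ f : A →ᵃ[ℝ] ℝ, ∀ P, δ P = f P + halfSqDist B O P := by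
  obtain ⟨f, hf⟩ := exists_affineMap_coe_eq_of_map_lineMap (k := ℝ)
    (f := fun P => δ P - halfSqDist B O P) fun P Q t => by
      rw [isQuadraticFn_and_isHessianOf_iff.mp ⟨hδ, hB⟩, halfSqDist_lineMap,
        AffineMap.lineMap_apply_ring]
      ring
  exact ⟨f, fun P => by rw [hf, sub_add_cancel]⟩

variable (g : LinearMap.BilinForm ℝ V)

/-- The inclusion of the affine functions into `W_g`. -/
def Wg.ofAffine : (A →ᵃ[ℝ] ℝ) →ₗ[ℝ] Wg g A where
  toFun f := ⟨f, (isQuadraticFn_and_isHessianOf_zero_affineMap f).1, 0,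
    (zero_smul ℝ g).symm ▸ (isQuadraticFn_and_isHessianOf_zero_affineMap f).2⟩
  map_add' _ _ := rfl
  map_smul' _ _ := rfl

/-- The function `halfSqDist g O` as an element of `W_g`; together with the affine functions it
spans `W_g`. -/
noncomputable def Wg.halfSqDist (O : A) : Wg g A :=
  ⟨_root_.halfSqDist g O, (isQuadraticFn_and_isHessianOf_halfSqDist g O).1, 1,
    (one_smul ℝ g).symm ▸ (isQuadraticFn_and_isHessianOf_halfSqDist g O).2⟩

variable {g}

lemma Wg.exists_eq_ofAffine_add_smul_halfSqDist (δ : Wg g A) (O : A) :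
    ∃ (f : A →ᵃ[ℝ] ℝ) (c : ℝ), δ = Wg.ofAffine g f + c • Wg.halfSqDist g O := by
  obtain ⟨hδ, c, hc⟩ := δ.2
  obtain ⟨f, hf⟩ := hδ.exists_eq_affineMap_add_halfSqDist hc O
  have hsmul : ∀ P, _root_.halfSqDist (c • g) O P = c * _root_.halfSqDist g O P := fun P =>
    mul_left_comm _ _ _
  exact ⟨f, c, Subtype.ext (funext fun P => (hf P).trans (congrArg (f P + ·) (hsmul P)))⟩

lemma Wg.dual_ext (O : A) {φ ψ : Module.Dual ℝ (Wg g A)}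
    (haff : ∀ f, φ (Wg.ofAffine g f) = ψ (Wg.ofAffine g f))
    (hquad : φ (Wg.halfSqDist g O) = ψ (Wg.halfSqDist g O)) : φ = ψ := by
  ext δ
  obtain ⟨f, c, rfl⟩ := Wg.exists_eq_ofAffine_add_smul_halfSqDist δ O
  rw [map_add, map_add, map_smul, map_smul, haff, hquad]

@[simp]
lemma evW_ofAffine (f : A →ᵃ[ℝ] ℝ) (P : A) : evW g P (Wg.ofAffine g f) = f P := rfl

@[simp]
lemma evW_halfSqDist_self (P : A) : evW g P (Wg.halfSqDist g P) = 0 := by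
  simp [evW, Wg.halfSqDist, halfSqDist]

lemma annihilatesOne_iff {φ : Module.Dual ℝ (Wg g A)} :
    AnnihilatesOne g φ ↔ φ (Wg.ofAffine g (AffineMap.const ℝ A 1)) = 0 :=
  ⟨fun h => h _, fun h _ => h⟩

lemma represents_iff {φ : Module.Dual ℝ (Wg g A)} {x : V} :
    Represents g φ x ↔ ∀ f, φ (Wg.ofAffine g f) = f.linear x :=
  ⟨fun h f => h f _, fun h f _ => h f⟩

lemma AnnihilatesOne.exists_represents [FiniteDimensional ℝ V] {φ : Module.Dual ℝ (Wg g A)}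
    (hφ : AnnihilatesOne g φ) : ∃ x, Represents g φ x := by
  obtain ⟨x, hx⟩ := exists_forall_dual_affineMap_apply_eq_linear (L := φ ∘ₗ Wg.ofAffine g)
    (annihilatesOne_iff.mp hφ)
  exact ⟨x, represents_iff.mpr hx⟩

lemma annihilatesOne_evW_sub_evW (P Q : A) : AnnihilatesOne g (evW g Q - evW g P) :=
  annihilatesOne_iff.mpr (by simp)

lemma represents_evW_sub_evW (P Q : A) : Represents g (evW g Q - evW g P) (Q -ᵥ P) :=
  represents_iff.mpr fun f => by simp [AffineMap.linearMap_vsub]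

/-- `v` is the coefficient functional `v_m` on `W_g`: it sends a function with Hessian `c • g`
to `c`. -/
def IsCoeffFunctional (g : LinearMap.BilinForm ℝ V) (v : Module.Dual ℝ (Wg g A)) : Prop :=
  ∀ (δ : Wg g A) (c : ℝ), IsHessianOf (δ : A → ℝ) (c • g) → v δ = c

namespace IsCoeffFunctional

variable {v : Module.Dual ℝ (Wg g A)}

lemma apply_ofAffine (hv : IsCoeffFunctional g v) (f : A →ᵃ[ℝ] ℝ) : v (Wg.ofAffine g f) = 0 :=
  hv _ 0 ((zero_smul ℝ g).symm ▸ (isQuadraticFn_and_isHessianOf_zero_affineMap f).2)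

lemma apply_halfSqDist (hv : IsCoeffFunctional g v) (O : A) : v (Wg.halfSqDist g O) = 1 :=
  hv _ 1 ((one_smul ℝ g).symm ▸ (isQuadraticFn_and_isHessianOf_halfSqDist g O).2)

lemma annihilatesOne (hv : IsCoeffFunctional g v) : AnnihilatesOne g v :=
  annihilatesOne_iff.mpr (hv.apply_ofAffine _)

lemma represents_zero (hv : IsCoeffFunctional g v) : Represents g v 0 :=
  represents_iff.mpr fun f => by rw [hv.apply_ofAffine, map_zero]

lemma two_smul_evW_add_sub_four_smul_evW_midpoint (hv : IsCoeffFunctional g v) (P Q : A) :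
    (2 : ℝ) • evW g P + (2 : ℝ) • evW g Q - (4 : ℝ) • evW g (midpoint ℝ P Q) =
      (1 / 2 * g (Q -ᵥ P) (Q -ᵥ P)) • v := by
  ext δ
  obtain ⟨c, hc⟩ := δ.2.2
  calc 2 * (δ : A → ℝ) P + 2 * (δ : A → ℝ) Q - 4 * (δ : A → ℝ) (midpoint ℝ P Q)
      = 1 / 2 * (c * g (Q -ᵥ P) (Q -ᵥ P)) := hc P Q
    _ = 1 / 2 * g (Q -ᵥ P) (Q -ᵥ P) * v δ := by rw [hv δ c hc]; ring

lemma exists_eq_evW_add_smul [FiniteDimensional ℝ V] (hv : IsCoeffFunctional g v)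
    {φ : Module.Dual ℝ (Wg g A)} (hφ : φ (Wg.ofAffine g (AffineMap.const ℝ A 1)) = 1) :
    ∃ (P : A) (t : ℝ), φ = evW g P + t • v := by
  obtain ⟨O⟩ := (inferInstance : Nonempty A)
  have hann : AnnihilatesOne g (φ - evW g O) := annihilatesOne_iff.mpr (by simp [hφ])
  obtain ⟨x, hx⟩ := hann.exists_represents
  refine ⟨x +ᵥ O, φ (Wg.halfSqDist g (x +ᵥ O)), Wg.dual_ext (x +ᵥ O) (fun f => ?_) ?_⟩
  · have hφf : φ (Wg.ofAffine g f) - f O = f.linear x := represents_iff.mp hx f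
    simp [hv.apply_ofAffine, ← hφf]
  · simp [hv.apply_halfSqDist]

end IsCoeffFunctional

namespace IsCayleyMenger

variable {C : LinearMap.BilinForm ℝ (Module.Dual ℝ (Wg g A))} {v : Module.Dual ℝ (Wg g A)}

lemma apply_evW_evW (hC : IsCayleyMenger g A C) (P Q : A) :
    C (evW g P) (evW g Q) = 1 / 2 * g (Q -ᵥ P) (Q -ᵥ P) := by
  obtain ⟨hsymm, hself, hrep⟩ := hC
  have h := hrep _ _ _ _ (annihilatesOne_evW_sub_evW P Q) (annihilatesOne_evW_sub_evW P Q)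
    (represents_evW_sub_evW P Q) (represents_evW_sub_evW P Q)
  simp only [map_sub, LinearMap.sub_apply, hself, hsymm (evW g Q) (evW g P)] at h
  linarith

lemma apply_evW_coeff (hC : IsCayleyMenger g A C) (hv : IsCoeffFunctional g v) {d : V}
    (hd : g d d ≠ 0) (P : A) : C (evW g P) v = 1 := by
  have hmid : midpoint ℝ P (d +ᵥ P) -ᵥ P = (1 / 2 : ℝ) • d := by
    rw [midpoint_vsub_left, vadd_vsub, invOf_eq_inv, one_div]
  have h := congrArg (C (evW g P)) (hv.two_smul_evW_add_sub_four_smul_evW_midpoint P (d +ᵥ P))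
  simp only [map_sub, map_add, map_smul, hC.apply_evW_evW, hmid, vsub_self, vadd_vsub, map_zero,
    LinearMap.smul_apply, smul_eq_mul] at h
  refine mul_left_cancel₀ hd ?_
  linarith

lemma apply_coeff_coeff (hC : IsCayleyMenger g A C) (hv : IsCoeffFunctional g v) : C v v = 0 := by
  rw [hC.2.2 v v 0 0 hv.annihilatesOne hv.annihilatesOne hv.represents_zero hv.represents_zero,
    map_zero, neg_zero]

lemma apply_coeff [FiniteDimensional ℝ V] (hC : IsCayleyMenger g A C)
    (hv : IsCoeffFunctional g v) {d : V} (hd : g d d ≠ 0) (φ : Module.Dual ℝ (Wg g A)) :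
    C φ v = φ (Wg.ofAffine g (AffineMap.const ℝ A 1)) := by
  obtain ⟨O⟩ := (inferInstance : Nonempty A)
  let c := φ (Wg.ofAffine g (AffineMap.const ℝ A 1))
  have hann : AnnihilatesOne g (φ - c • evW g O) := annihilatesOne_iff.mpr (by simp [c])
  obtain ⟨x, hx⟩ := hann.exists_represents
  have h : C (φ - c • evW g O) v = -g x 0 :=
    hC.2.2 _ _ _ _ hann hv.annihilatesOne hx hv.represents_zero
  simpa [hC.apply_evW_coeff hv hd, sub_eq_zero] using h

lemma apply_evW_add_smul_self (hC : IsCayleyMenger g A C) (hv : IsCoeffFunctional g v) {d : V}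
    (hd : g d d ≠ 0) (P : A) (t : ℝ) : C (evW g P + t • v) (evW g P + t • v) = 2 * t := by
  simp only [map_add, map_smul, LinearMap.add_apply, LinearMap.smul_apply, smul_eq_mul, hC.2.1,
    hC.1 v (evW g P), hC.apply_evW_coeff hv hd, hC.apply_coeff_coeff hv]
  ring

end IsCayleyMenger

end CayleyMenger

/-- Let `g ≠ 0` be a symmetric bilinear form, `C = CM_g` its
Cayley–Menger form and `v_m` the coefficient functional on `W_g` (sending `δ` to the
unique `λ` with `Hessian(δ) = λ·g`).  A functional `φ` on `W_g` equals `ev_P` for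
some point `P ∈ A` iff `C(φ, φ) = 0` and `C(φ, v_m) = 1`. -/
theorem stmt17 {V A : Type*} [AddCommGroup V] [Module ℝ V] [AddTorsor V A]
    [FiniteDimensional ℝ V]
    (g : LinearMap.BilinForm ℝ V) (hgs : ∀ x y, g x y = g y x) (hg0 : g ≠ 0)
    (C : LinearMap.BilinForm ℝ (Module.Dual ℝ (Wg g A)))
    (hC : IsCayleyMenger g A C)
    (vm : Module.Dual ℝ (Wg g A))
    (hvm : ∀ (δ : Wg g A) (lam : ℝ), IsHessianOf (δ : A → ℝ) (lam • g) →
      vm δ = lam) :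
    ∀ φ : Module.Dual ℝ (Wg g A),
      (∃ P : A, φ = evW g P) ↔ (C φ φ = 0 ∧ C φ vm = 1) := by
  have hv : IsCoeffFunctional g vm := hvm
  obtain ⟨d, hd⟩ := LinearMap.BilinForm.exists_bilinForm_self_ne_zero hg0 ⟨hgs⟩
  intro φ
  constructor
  · rintro ⟨P, rfl⟩
    exact ⟨hC.2.1 P, hC.apply_evW_coeff hv hd P⟩
  · rintro ⟨hφφ, hφv⟩
    obtain ⟨P, t, rfl⟩ := hv.exists_eq_evW_add_smul ((hC.apply_coeff hv hd φ).symm.trans hφv)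
    rw [hC.apply_evW_add_smul_self hv hd] at hφφ
    obtain rfl : t = 0 := by linarith
    exact ⟨P, by rw [zero_smul, add_zero]⟩
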